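/- arXiv:math/0110255 — 5 statements merged into one kernel-verified Lean document; each statement's English description precedes it below -/
import Mathlib

section
/- Let C be the multiplicative monoid of polynomials in ℤ[t] with positive leading coefficient. Then there exists an index type ι and a ring isomorphism between the monoid ring ℤ[C] and the multivariate polynomial ring ℤ[x_i : i ∈ ι]. -/
/-- The multiplicative monoid of polynomials in `ℤ[t]` with positive leading
coefficient, as a submonoid of the multiplicative monoid of `ℤ[t]`. -/
noncomputable def posLeadingCoeff : Submonoid (Polynomial ℤ) where
  carrier := {p | 0 < p.leadingCoeff}
  one_mem' := by simp only [Set.mem_setOf_eq, Polynomial.leadingCoeff_one]; exact one_pos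
  mul_mem' := fun {p q} hp hq => by
    simp only [Set.mem_setOf_eq, Polynomial.leadingCoeff_mul] at *
    exact mul_pos hp hq

namespace posLeadingCoeff

open Polynomial UniqueFactorizationMonoid

theorem mem_iff {p : ℤ[X]} : p ∈ posLeadingCoeff ↔ 0 < p.leadingCoeff := Iff.rfl

theorem ne_zero_of_mem {p : ℤ[X]} (hp : p ∈ posLeadingCoeff) : p ≠ 0 :=
  leadingCoeff_ne_zero.mp (mem_iff.mp hp).ne'

theorem mem_iff_normalize_eq {p : ℤ[X]} (hp : p ≠ 0) :
    p ∈ posLeadingCoeff ↔ normalize p = p := by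
  have hlc : p.leadingCoeff ≠ 0 := leadingCoeff_ne_zero.mpr hp
  constructor
  · intro h
    rw [normalize_apply, coe_normUnit, Int.normUnit_eq, if_pos (mem_iff.mp h).le, Units.val_one, C_1,
      mul_one]
  · intro h
    have hnonneg : 0 ≤ p.leadingCoeff := by
      rw [← h, leadingCoeff_normalize]
      exact Int.nonneg_of_normalize_eq_self (normalize_idem _)
    exact mem_iff.mpr (lt_of_le_of_ne hnonneg hlc.symm)

theorem eq_of_associated {p q : ℤ[X]} (hp : p ∈ posLeadingCoeff) (hq : q ∈ posLeadingCoeff)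
    (h : Associated p q) : p = q :=
  h.eq_of_normalized ((mem_iff_normalize_eq (ne_zero_of_mem hp)).mp hp)
    ((mem_iff_normalize_eq (ne_zero_of_mem hq)).mp hq)

/-- The irreducible integer polynomials with positive leading coefficient. -/
abbrev IrreducibleElement : Type := {p : posLeadingCoeff // Irreducible (p : ℤ[X])}

/-- The product of a multiset of irreducible elements. -/
noncomputable def multisetProd :
    Multiplicative (Multiset IrreducibleElement) →* posLeadingCoeff where
  toFun s := (s.toAdd.map Subtype.val).prod
  map_one' := by simp
  map_mul' s t := by simp

theorem coe_multisetProd (s : Multiplicative (Multiset IrreducibleElement)) :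
    (multisetProd s : ℤ[X]) = (s.toAdd.map fun p => (p.1 : ℤ[X])).prod := by
  change (((s.toAdd.map Subtype.val).prod : posLeadingCoeff) : ℤ[X]) = _
  rw [Submonoid.coe_multiset_prod, Multiset.map_map]
  rfl

theorem multisetProd_injective : Function.Injective multisetProd := by
  intro s t hst
  have hprod := congrArg Subtype.val hst
  rw [coe_multisetProd, coe_multisetProd] at hprod
  have hirr (u : Multiset IrreducibleElement) :
      ∀ x ∈ u.map fun p => (p.1 : ℤ[X]), Irreducible x := by
    intro x hx
    obtain ⟨p, -, rfl⟩ := Multiset.mem_map.mp hx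
    exact p.2
  have hrel := factors_unique (hirr s.toAdd) (hirr t.toAdd) (.of_eq hprod)
  rw [Multiset.rel_map] at hrel
  exact Multiplicative.toAdd.injective <| Multiset.rel_eq.mp <| hrel.mono fun p _ q _ h =>
    Subtype.ext <| Subtype.ext <| eq_of_associated p.1.2 q.1.2 h

theorem multisetProd_surjective : Function.Surjective multisetProd := by
  intro p
  have hp := ne_zero_of_mem p.2
  have hmem (q : ℤ[X]) (hq : q ∈ normalizedFactors (p : ℤ[X])) : q ∈ posLeadingCoeff :=
    (mem_iff_normalize_eq (irreducible_of_normalized_factor q hq).ne_zero).mpr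
      (normalize_normalized_factor q hq)
  let s : Multiset IrreducibleElement := (normalizedFactors (p : ℤ[X])).attach.map fun q =>
    ⟨⟨q.1, hmem q.1 q.2⟩, irreducible_of_normalized_factor q.1 q.2⟩
  have hs : (multisetProd (.ofAdd s) : ℤ[X]) = (normalizedFactors (p : ℤ[X])).prod := by
    simp [coe_multisetProd, s]
  refine ⟨.ofAdd s, Subtype.ext <| eq_of_associated (Subtype.property _) p.2 ?_⟩
  rw [hs]
  exact prod_normalizedFactors hp

/-- Unique factorization: the monoid is free commutative on its irreducible elements. -/
noncomputable def additiveEquivFinsupp :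
    Additive posLeadingCoeff ≃+ (IrreducibleElement →₀ ℕ) :=
  (MulEquiv.toAdditiveLeft
    (MulEquiv.ofBijective multisetProd
      ⟨multisetProd_injective, multisetProd_surjective⟩).symm).trans Multiset.toFinsupp

end posLeadingCoeff

/-- The monoid ring `ℤ[C]`, where `C` is the multiplicative monoid of integer
polynomials with positive leading coefficient, is isomorphic as a ring to a
multivariate polynomial ring over `ℤ` in some set of variables. -/
theorem monoidAlgebra_posLeadingCoeff_iso_mvPolynomial :
    ∃ ι : Type, Nonempty (MonoidAlgebra ℤ posLeadingCoeff ≃+* MvPolynomial ι ℤ) := by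
  exact ⟨posLeadingCoeff.IrreducibleElement, ⟨(MonoidAlgebra.toAdditive ℤ posLeadingCoeff).trans
    (AddMonoidAlgebra.mapDomainRingEquiv ℤ posLeadingCoeff.additiveEquivFinsupp)⟩⟩
end

section
/- Let K be a field and let f = Σ_{i≥0} a_i t^i be a formal power series with coefficients a_i ∈ K. Then f is a rational function (i.e. there exist polynomials P, Q ∈ K[t] with Q ≠ 0 such that Q·f = P as power series) if and only if there exist n > 0 and n₀ > 0 such that for every m > n₀ the determinant of the (n+1)×(n+1) Hankel matrix whose (i,j)-entry (0 ≤ i,j ≤ n) is a_{m+i+j} is zero. -/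
/-- The `k × k` Hankel matrix of the sequence `a` starting at index `m`. -/
def hankelMatrix {K : Type*} (a : ℕ → K) (m k : ℕ) : Matrix (Fin k) (Fin k) K :=
  fun i j => a (m + i + j)

section Hankel

variable {K : Type*} [Field K] {a : ℕ → K}

lemma hankelMatrix_det_eq_zero_iff {m k : ℕ} :
    (hankelMatrix a m k).det = 0 ↔
      ∃ w : Fin k → K, w ≠ 0 ∧ ∀ i : Fin k, ∑ j : Fin k, a (m + i + j) * w j = 0 := by
  rw [← Matrix.exists_mulVec_eq_zero_iff]
  simp only [funext_iff, Matrix.mulVec, dotProduct, hankelMatrix, Pi.zero_apply]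

lemma eq_zero_of_hankelMatrix_det_ne_zero {m k : ℕ} (h : (hankelMatrix a m k).det ≠ 0)
    {w : Fin k → K} (hw : ∀ i : Fin k, ∑ j : Fin k, a (m + i + j) * w j = 0) : w = 0 := by
  by_contra hne
  exact h (hankelMatrix_det_eq_zero_iff.2 ⟨w, hne, hw⟩)

lemma eq_zero_of_last_eq_zero {m r : ℕ} (h : (hankelMatrix a m r).det ≠ 0)
    {w : Fin (r + 1) → K} (hlast : w (Fin.last r) = 0)
    (hw : ∀ i < r, ∑ j : Fin (r + 1), a (m + i + j) * w j = 0) : w = 0 := by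
  have key : (fun j : Fin r => w j.castSucc) = 0 := by
    refine eq_zero_of_hankelMatrix_det_ne_zero h fun i => ?_
    simpa [Fin.sum_univ_castSucc, hlast] using hw i i.isLt
  funext j
  refine Fin.lastCases hlast (fun j => congrFun key j) j

/-- Vanishing of the `r × r` Hankel determinants propagates to the next starting index when the
bordering `(r + 1) × (r + 1)` determinant vanishes. -/
lemma hankelMatrix_det_succ_eq_zero {m r : ℕ} (h₁ : (hankelMatrix a m (r + 1)).det = 0)
    (h₀ : (hankelMatrix a m r).det = 0) : (hankelMatrix a (m + 1) r).det = 0 := by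
  by_contra h
  obtain ⟨w, hw0, hw⟩ := hankelMatrix_det_eq_zero_iff.1 h₁
  obtain ⟨u, hu0, hu⟩ := hankelMatrix_det_eq_zero_iff.1 h₀
  have hlast : w (Fin.last r) ≠ 0 := fun hl => hw0 <| eq_zero_of_last_eq_zero h hl fun i hi => by
    simpa [add_assoc, add_comm, add_left_comm] using hw ⟨i + 1, by omega⟩
  have hrow : ∑ j : Fin r, a (m + r + j) * u j = 0 := by
    have hsum : ∑ i : Fin (r + 1), w i * ∑ j : Fin r, a (m + i + j) * u j = 0 := by
      simp only [Finset.mul_sum]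
      rw [Finset.sum_comm]
      refine Finset.sum_eq_zero fun j _ => ?_
      calc ∑ i : Fin (r + 1), w i * (a (m + i + j) * u j)
          = u j * ∑ i : Fin (r + 1), a (m + (j.castSucc : Fin (r + 1)) + i) * w i := by
            rw [Finset.mul_sum]
            refine Finset.sum_congr rfl fun i _ => ?_
            rw [Fin.val_castSucc, add_right_comm]
            ring
        _ = 0 := by rw [hw, mul_zero]
    rw [Fin.sum_univ_castSucc] at hsum
    simpa [hu, hlast] using hsum
  refine hu0 (eq_zero_of_hankelMatrix_det_ne_zero h fun i => ?_)
  rcases Nat.lt_or_ge (i + 1) r with hi | hi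
  · simpa [add_assoc, add_comm, add_left_comm] using hu ⟨i + 1, hi⟩
  · have : m + 1 + (i : ℕ) = m + r := by omega
    rw [this, hrow]

lemma exists_recurrence_of_det_ne_zero {M r : ℕ}
    (h₁ : ∀ m ≥ M, (hankelMatrix a m (r + 1)).det = 0)
    (h₀ : ∀ m ≥ M, (hankelMatrix a m r).det ≠ 0) :
    ∃ w : Fin (r + 1) → K, w ≠ 0 ∧ ∀ m ≥ M, ∑ j : Fin (r + 1), a (m + j) * w j = 0 := by
  obtain ⟨w, hw0, hw⟩ := hankelMatrix_det_eq_zero_iff.1 (h₁ M le_rfl)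
  refine ⟨w, hw0, ?_⟩
  suffices H : ∀ m ≥ M, ∀ i ≤ r, ∑ j : Fin (r + 1), a (m + i + j) * w j = 0 from
    fun m hm => H m hm 0 (Nat.zero_le r)
  intro m hm
  induction m, hm using Nat.le_induction with
  | base => exact fun i hi => hw ⟨i, by omega⟩
  | succ m hm ih =>
    have hshift : ∀ i < r, ∑ j : Fin (r + 1), a (m + 1 + i + j) * w j = 0 := fun i hi => by
      have := ih (i + 1) hi
      rwa [show m + (i + 1) = m + 1 + i by omega] at this
    obtain ⟨v, hv0, hv⟩ := hankelMatrix_det_eq_zero_iff.1 (h₁ (m + 1) (by omega))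
    have hdet := h₀ (m + 1) (by omega)
    have hvlast : v (Fin.last r) ≠ 0 := fun hl =>
      hv0 <| eq_zero_of_last_eq_zero hdet hl fun i hi => hv ⟨i, by omega⟩
    have hsum : ∀ N, ∑ j : Fin (r + 1),
        a (N + j) * (v (Fin.last r) * w j - w (Fin.last r) * v j) =
        v (Fin.last r) * ∑ j : Fin (r + 1), a (N + j) * w j -
          w (Fin.last r) * ∑ j : Fin (r + 1), a (N + j) * v j := fun N => by
      rw [Finset.mul_sum, Finset.mul_sum, ← Finset.sum_sub_distrib]
      exact Finset.sum_congr rfl fun j _ => by ring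
    have hprop : (fun j => v (Fin.last r) * w j - w (Fin.last r) * v j) = 0 := by
      refine eq_zero_of_last_eq_zero hdet (by ring) fun i hi => ?_
      have hvi : ∑ j : Fin (r + 1), a (m + 1 + i + j) * v j = 0 := hv ⟨i, by omega⟩
      rw [hsum, hshift i hi, hvi, mul_zero, mul_zero, sub_zero]
    intro i hi
    have hvi : ∑ j : Fin (r + 1), a (m + 1 + i + j) * v j = 0 := hv ⟨i, by omega⟩
    have hzero := hsum (m + 1 + i)
    simp only [fun j => congrFun hprop j, Pi.zero_apply, mul_zero, Finset.sum_const_zero, hvi,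
      sub_zero] at hzero
    exact (mul_eq_zero.1 hzero.symm).resolve_left hvlast

/-- If the Hankel determinants of some fixed size eventually vanish, then the sequence eventually
satisfies a nontrivial linear recurrence. -/
lemma exists_recurrence_of_hankelMatrix_det_eq_zero (k M : ℕ)
    (h : ∀ m ≥ M, (hankelMatrix a m k).det = 0) :
    ∃ r M', ∃ w : Fin (r + 1) → K, w ≠ 0 ∧
      ∀ m ≥ M', ∑ j : Fin (r + 1), a (m + j) * w j = 0 := by
  induction k generalizing M with
  | zero => simpa using h M le_rfl
  | succ r ih =>
    by_cases h₀ : ∀ m ≥ M, (hankelMatrix a m r).det ≠ 0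
    · exact ⟨r, M, exists_recurrence_of_det_ne_zero h h₀⟩
    · push Not at h₀
      obtain ⟨m₀, hm₀, hdet⟩ := h₀
      refine ih m₀ fun m hm => ?_
      induction m, hm using Nat.le_induction with
      | base => exact hdet
      | succ m hm hd => exact hankelMatrix_det_succ_eq_zero (h m (by omega)) hd

lemma coeff_polynomial_mul_mk {Q : Polynomial K} {n : ℕ} (hQ : Q.natDegree ≤ n) (m : ℕ) :
    PowerSeries.coeff (m + n) ((Q : PowerSeries K) * PowerSeries.mk a) =
      ∑ j : Fin (n + 1), a (m + j) * Q.coeff (n - j) := by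
  rw [PowerSeries.coeff_mul, Finset.Nat.sum_antidiagonal_eq_sum_range_succ_mk,
    Fin.sum_univ_eq_sum_range (fun j => a (m + j) * Q.coeff (n - j)),
    ← Finset.sum_range_reflect (fun j => a (m + j) * Q.coeff (n - j))]
  symm
  refine Finset.sum_subset_zero_on_sdiff (Finset.range_mono (by omega)) ?_ ?_
  · intro s hs
    simp only [Finset.mem_sdiff, Finset.mem_range] at hs
    simp [Polynomial.coeff_eq_zero_of_natDegree_lt (show Q.natDegree < s by omega)]
  · intro s hs
    rw [Finset.mem_range] at hs
    simp only [Polynomial.coeff_coe, PowerSeries.coeff_mk]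
    rw [show n - (n + 1 - 1 - s) = s by omega, show m + (n + 1 - 1 - s) = m + n - s by omega,
      mul_comm]

end Hankel

/-- A formal power series `f = Σ aᵢ tⁱ` over a field `K` is rational (i.e. `Q·f = P`
for some polynomials `P, Q` with `Q ≠ 0`) if and only if there exist `n > 0` and
`n₀ > 0` such that for all `m > n₀` the Hankel determinant
`det (a_{m+i+j})_{0 ≤ i,j ≤ n}` vanishes. -/
theorem powerSeries_rational_iff_hankel_det_eq_zero
    {K : Type*} [Field K] (a : ℕ → K) :
    (∃ P Q : Polynomial K, Q ≠ 0 ∧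
        (Q : PowerSeries K) * PowerSeries.mk a = (P : PowerSeries K)) ↔
      ∃ n > 0, ∃ n₀ > 0, ∀ m > n₀,
        Matrix.det (fun i j : Fin (n + 1) => a (m + i + j)) = 0 := by
  constructor
  · rintro ⟨P, Q, hQ, hPQ⟩
    refine ⟨Q.natDegree + 1, Nat.succ_pos _, P.natDegree + 1, Nat.succ_pos _, fun m hm => ?_⟩
    refine hankelMatrix_det_eq_zero_iff.2
      ⟨fun j => Q.coeff (Q.natDegree + 1 - j), fun h0 => ?_, fun i => ?_⟩
    · have := congrFun h0 ⟨1, by omega⟩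
      simp [hQ] at this
    · rw [← coeff_polynomial_mul_mk (Nat.le_succ _), hPQ, Polynomial.coeff_coe]
      exact Polynomial.coeff_eq_zero_of_natDegree_lt (by omega)
  · rintro ⟨n, -, n₀, -, h⟩
    obtain ⟨r, M, w, hw0, hw⟩ :=
      exists_recurrence_of_hankelMatrix_det_eq_zero (n + 1) (n₀ + 1) fun m hm => h m hm
    classical
    set Q : Polynomial K := Polynomial.ofFn (r + 1) (fun j => w j.rev) with hQdef
    have hcoeff : ∀ j : Fin (r + 1), Q.coeff (r - j) = w j := fun j => by
      rw [hQdef, Polynomial.ofFn_coeff_eq_val_of_lt _ (by omega : r - (j : ℕ) < r + 1)]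
      congr 1
      ext
      simp only [Fin.val_rev]
      omega
    have hdeg : Q.natDegree ≤ r :=
      Nat.lt_succ_iff.1 (Polynomial.ofFn_natDegree_lt (Nat.succ_pos r) _)
    refine ⟨PowerSeries.trunc (M + r) ((Q : PowerSeries K) * PowerSeries.mk a), Q, ?_, ?_⟩
    · intro hQ0
      refine hw0 (funext fun j => ?_)
      rw [← hcoeff j, hQ0, Polynomial.coeff_zero, Pi.zero_apply]
    · ext N
      rw [Polynomial.coeff_coe, PowerSeries.coeff_trunc]
      split_ifs with hN
      · rfl
      · obtain ⟨m, rfl⟩ : ∃ m, N = m + r := ⟨N - r, by omega⟩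
        rw [coeff_polynomial_mul_mk hdeg]
        simp only [hcoeff]
        exact hw m (by omega)
end

section
/- Let n ∈ ℕ and let σ be a permutation of {0, 1, …, n}. If the multiset {j + σ(j) : j = 0, …, n} equals the multiset {2j : j = 0, …, n}, then σ is the identity permutation. -/
/-- If `σ` is a permutation of `{0, …, n}` such that the multiset
`{j + σ(j) : j = 0, …, n}` equals the multiset `{2j : j = 0, …, n}`,
then `σ` is the identity. -/
theorem perm_eq_one_of_multiset_add_eq (n : ℕ) (σ : Equiv.Perm (Fin (n + 1)))
    (h : Multiset.map (fun j : Fin (n + 1) => (j : ℕ) + (σ j : ℕ)) Finset.univ.val =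
         Multiset.map (fun j : Fin (n + 1) => 2 * (j : ℕ)) Finset.univ.val) :
    σ = 1 := by
  have sum_sq_add : ∑ j : Fin (n + 1), ((j : ℤ) + (σ j : ℤ)) ^ 2 =
      ∑ j : Fin (n + 1), (2 * (j : ℤ)) ^ 2 := by
    have := congrArg (fun s : Multiset ℕ => (s.map fun k => (k : ℤ) ^ 2).sum) h
    simpa [Multiset.map_map, Function.comp_def, Finset.sum] using this
  have sum_sq_perm : ∑ j : Fin (n + 1), (σ j : ℤ) ^ 2 = ∑ j : Fin (n + 1), (j : ℤ) ^ 2 :=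
    Equiv.sum_comp σ fun j : Fin (n + 1) => (j : ℤ) ^ 2
  -- Parallelogram law: `(a - b)² = 2a² + 2b² - (a + b)²`.
  have sum_sq_sub : ∑ j : Fin (n + 1), ((j : ℤ) - (σ j : ℤ)) ^ 2 = 0 := by
    have parallelogram : ∑ j : Fin (n + 1), ((j : ℤ) - (σ j : ℤ)) ^ 2 =
        2 * ∑ j : Fin (n + 1), (j : ℤ) ^ 2 + 2 * ∑ j : Fin (n + 1), (σ j : ℤ) ^ 2 -
          ∑ j : Fin (n + 1), ((j : ℤ) + (σ j : ℤ)) ^ 2 := by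
      rw [Finset.mul_sum, Finset.mul_sum, ← Finset.sum_add_distrib, ← Finset.sum_sub_distrib]
      exact Finset.sum_congr rfl fun j _ => by ring
    rw [parallelogram, sum_sq_add, sum_sq_perm]
    simp only [mul_pow, ← Finset.mul_sum]
    ring
  ext j
  have sq_eq_zero := (Finset.sum_eq_zero_iff_of_nonneg fun j _ => sq_nonneg _).mp sum_sq_sub j
    (Finset.mem_univ j)
  have sub_eq_zero := pow_eq_zero_iff two_ne_zero |>.mp sq_eq_zero
  simp only [Equiv.Perm.one_apply]
  omega
end

section
/- Let r ≥ 2 be a natural number, N ≥ 1 a natural number, and let c_1, …, c_N and d_1, …, d_N be integers. If the polynomial identity ∏_{j=1}^{N} ∏_{k=0}^{r−2} (X + c_j + k) = ∏_{j=1}^{N} ∏_{k=0}^{r−2} (X + d_j + k) holds in ℤ[X], then the multiset {c_1, …, c_N} equals the multiset {d_1, …, d_N}. -/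
open Polynomial in
/-- The chain `(X + a)(X + a + 1)⋯(X + a + m - 1)` of `m` consecutive linear factors. -/
noncomputable def linearChain (m : ℕ) (a : ℤ) : ℤ[X] :=
  ∏ k ∈ Finset.range m, (X + C (a + (k : ℤ)))

theorem linearChain_ne_zero (m : ℕ) (a : ℤ) : linearChain m a ≠ 0 :=
  Finset.prod_ne_zero_iff.mpr fun _ _ => Polynomial.X_add_C_ne_zero _

theorem eval_linearChain_eq_zero_iff (m : ℕ) (a x : ℤ) :
    (linearChain m a).eval x = 0 ↔ ∃ k < m, x + (a + (k : ℤ)) = 0 := by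
  simp [linearChain, Polynomial.eval_prod, Finset.prod_eq_zero_iff]

theorem eval_prod_map_linearChain_eq_zero_iff (m : ℕ) (s : Multiset ℤ) (x : ℤ) :
    ((s.map (linearChain m)).prod).eval x = 0 ↔ ∃ a ∈ s, ∃ k < m, x + (a + (k : ℤ)) = 0 := by
  simp only [← eval_linearChain_eq_zero_iff]
  rw [Polynomial.eval_multiset_prod, Multiset.prod_eq_zero_iff]
  simp

/-- A lower bound of `t` that starts a chain on the left also starts one on the right. -/
theorem mem_of_prod_map_linearChain_eq {m : ℕ} (hm : 0 < m) {s t : Multiset ℤ} {a : ℤ}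
    (h : (s.map (linearChain m)).prod = (t.map (linearChain m)).prod)
    (ha : a ∈ s) (hmin : ∀ b ∈ t, a ≤ b) : a ∈ t := by
  have hs : ((s.map (linearChain m)).prod).eval (-a) = 0 :=
    (eval_prod_map_linearChain_eq_zero_iff m s (-a)).mpr ⟨a, ha, 0, hm, by simp⟩
  rw [h] at hs
  obtain ⟨b, hb, k, -, hk⟩ := (eval_prod_map_linearChain_eq_zero_iff m t (-a)).mp hs
  have hab := hmin b hb
  obtain rfl : a = b := by lia
  exact hb

theorem prod_map_linearChain_injective {m : ℕ} (hm : 0 < m) :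
    Function.Injective fun s : Multiset ℤ => (s.map (linearChain m)).prod := by
  intro s
  induction s using Multiset.strongInductionOn with
  | ih s ih =>
  intro t h
  dsimp only at h
  by_cases hst : s + t = 0
  · obtain ⟨rfl, rfl⟩ := add_eq_zero.mp hst
    rfl
  obtain ⟨a, ha, hmin⟩ := (s + t).toFinset.exists_min_image id
    (Multiset.toFinset_nonempty.mpr hst)
  simp only [Multiset.mem_toFinset, Multiset.mem_add, id] at ha hmin
  have has : a ∈ s := ha.elim id fun hat =>
    mem_of_prod_map_linearChain_eq hm h.symm hat fun b hb => hmin b (.inl hb)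
  have hat : a ∈ t := mem_of_prod_map_linearChain_eq hm h has fun b hb => hmin b (.inr hb)
  obtain ⟨s', rfl⟩ := Multiset.exists_cons_of_mem has
  obtain ⟨t', rfl⟩ := Multiset.exists_cons_of_mem hat
  simp only [Multiset.map_cons, Multiset.prod_cons] at h
  rw [ih s' (Multiset.lt_cons_self s' a) (mul_left_cancel₀ (linearChain_ne_zero m a) h)]

open Polynomial in
/-- If `r ≥ 2`, `N ≥ 1`, and the products of chains of shifted linear factors
`∏_j ∏_{k=0}^{r-2} (X + c_j + k)` and `∏_j ∏_{k=0}^{r-2} (X + d_j + k)` coincide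
in `ℤ[X]`, then the multisets `{c_1, …, c_N}` and `{d_1, …, d_N}` coincide. -/
theorem multiset_eq_of_prod_shifted_factors_eq (r N : ℕ) (hr : 2 ≤ r) (hN : 1 ≤ N)
    (c d : Fin N → ℤ)
    (h : (∏ j, ∏ k ∈ Finset.range (r - 1), (X + C (c j + (k : ℤ)))) =
         (∏ j, ∏ k ∈ Finset.range (r - 1), (X + C (d j + (k : ℤ))))) :
    Multiset.map c Finset.univ.val = Multiset.map d Finset.univ.val := by
  apply prod_map_linearChain_injective (m := r - 1) (by lia)
  simp only [Multiset.map_map]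
  exact h
end

section
/- Let r ≥ 2 and n be natural numbers. Then there exists a natural number m > 0 such that for every permutation σ of {0, 1, …, n}: if ∏_{j=0}^{n} binom(r − 1 + m + j + σ(j), r − 1) = ∏_{j=0}^{n} binom(r − 1 + m + 2j, r − 1), then σ is the identity permutation. -/
/-- Strict midpoint log-concavity of `x ↦ Nat.choose x k` on `k ≤ x`, for `k > 0`. -/
theorem Nat.choose_mul_choose_lt_choose_sq {k x d : ℕ} (hk : 0 < k) (hx : k ≤ x) (hd : 0 < d) :
    Nat.choose x k * Nat.choose (x + 2 * d) k < Nat.choose (x + d) k ^ 2 := by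
  have key : x.descFactorial k * (x + 2 * d).descFactorial k < (x + d).descFactorial k ^ 2 := by
    simp only [Nat.descFactorial_eq_prod_range, ← Finset.prod_mul_distrib, ← Finset.prod_pow]
    refine Finset.prod_lt_prod_of_nonempty (fun i hi => ?_) (fun i hi => ?_) (by simpa using hk.ne')
    all_goals
      have hi := Finset.mem_range.mp hi
      obtain ⟨y, rfl⟩ := Nat.exists_eq_add_of_lt (hi.trans_le hx)
    · exact Nat.mul_pos (by omega) (by omega)
    · rw [show i + y + 1 - i = y + 1 by omega, show i + y + 1 + 2 * d - i = y + 1 + 2 * d by omega,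
        show i + y + 1 + d - i = y + 1 + d by omega]
      nlinarith
  simp only [Nat.descFactorial_eq_factorial_mul_choose] at key
  refine lt_of_mul_lt_mul_left (a := k.factorial ^ 2) ?_ (Nat.zero_le _)
  linarith

/-- Strict log-concavity of binomial coefficients, for the pair of points `x + 2 * i`, `x + 2 * j`
and their midpoint. -/
theorem Nat.choose_add_mul_choose_add_lt {k x i j : ℕ} (hk : 0 < k) (hx : k ≤ x) (hij : i ≠ j) :
    Nat.choose (x + 2 * i) k * Nat.choose (x + 2 * j) k < Nat.choose (x + i + j) k ^ 2 := by
  wlog h : i < j generalizing i j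
  · rw [mul_comm, add_right_comm]
    exact this hij.symm (by omega)
  obtain ⟨d, rfl⟩ := Nat.exists_eq_add_of_lt h
  convert Nat.choose_mul_choose_lt_choose_sq (x := x + 2 * i) (d := d + 1) hk (by omega)
    (by omega) using 3 <;> ring


/-- For `r ≥ 2` and any `n`, there exists `m > 0` such that for every permutation
`σ` of `{0, …, n}`, the equality of products of binomial coefficients
`∏_j C(r−1+m+j+σ(j), r−1) = ∏_j C(r−1+m+2j, r−1)` forces `σ` to be the identity. -/
theorem exists_m_binomial_products_detect_identity (r n : ℕ) (hr : 2 ≤ r) :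
    ∃ m > 0, ∀ σ : Equiv.Perm (Fin (n + 1)),
      (∏ j : Fin (n + 1), Nat.choose (r - 1 + m + (j : ℕ) + (σ j : ℕ)) (r - 1)) =
        (∏ j : Fin (n + 1), Nat.choose (r - 1 + m + 2 * (j : ℕ)) (r - 1)) →
      σ = 1 := by
  refine ⟨1, one_pos, fun σ h => ?_⟩
  by_contra hσ
  obtain ⟨a, ha⟩ : ∃ a, σ a ≠ a := by
    by_contra! hfix
    exact hσ (Equiv.ext hfix)
  have hk : 0 < r - 1 := by omega
  have hlt : ∏ j : Fin (n + 1), (Nat.choose (r - 1 + 1 + 2 * (j : ℕ)) (r - 1) *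
        Nat.choose (r - 1 + 1 + 2 * (σ j : ℕ)) (r - 1)) <
      ∏ j : Fin (n + 1), Nat.choose (r - 1 + 1 + (j : ℕ) + (σ j : ℕ)) (r - 1) ^ 2 := by
    refine Finset.prod_lt_prod (fun j _ => ?_) (fun j _ => ?_) ⟨a, Finset.mem_univ a, ?_⟩
    · exact Nat.mul_pos (Nat.choose_pos (by omega)) (Nat.choose_pos (by omega))
    · by_cases hj : σ j = j
      · rw [hj, sq, two_mul, ← add_assoc]
      · exact (Nat.choose_add_mul_choose_add_lt hk (by omega)
          (fun e => hj (Fin.ext e.symm))).le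
    · exact Nat.choose_add_mul_choose_add_lt hk (by omega) (fun e => ha (Fin.ext e.symm))
  rw [Finset.prod_mul_distrib, Finset.prod_pow, h,
    Equiv.prod_comp σ (fun j => Nat.choose (r - 1 + 1 + 2 * (j : ℕ)) (r - 1)), sq] at hlt
  exact lt_irrefl _ hlt
end
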